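/- arXiv:2405.08692 — 2 statements merged into one kernel-verified Lean document; each statement's English description precedes it below -/
import Mathlib

section
/- Let D ⊆ ℂ be a nonempty open, connected, simply connected symmetric set with D ∩ ℝ ≠ ∅ whose closure is homeomorphic to the closed unit disc, and let x₀ ∈ D ∩ ℝ. Then there exists a continuous map H : D × [0,1] → D such that H(z,1) = z and H(z,0) = x₀ for all z ∈ D, and for every t ∈ [0,1] the map z ↦ H(z,t) is holomorphic on D and Schwarz symmetric, i.e. H(conj z, t) = conj(H(z,t)). -/
open Set Metric

open Filter Topology Function
open scoped ComplexConjugate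

/-!
A Riemann map `f` of `D` at `x₀` solves the extremal problem of maximizing `‖deriv f x₀‖` among the
univalent maps of `D` into the unit disc that vanish at `x₀`. Competitors exist because `D` carries
a holomorphic square root of `z - a` for `a ∉ D`; Montel and Hurwitz provide a maximizer; and if the
maximizer missed a value of the disc, a square root would yield a competitor with larger derivative.

By the Schwarz lemma `f` is unique up to a rotation, and `conj ∘ f ∘ conj` is again a Riemann map at
the real point `x₀`, so `(deriv f x₀)⁻¹ * f` is Schwarz symmetric. Its image is a disc around the
origin, on which `w ↦ t • w` is holomorphic and commutes with conjugation for every `t ∈ [0, 1]`;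
carried back to `D`, these contractions are the required maps. For `D = ℂ` the chart `z - x₀` plays
the role of `f`.
-/

section Hurwitz

theorem le_norm_of_forall_mem_frontier_le_norm {E : Type*} [NormedAddCommGroup E]
    [NormedSpace ℂ E] [Nontrivial E] {f : E → ℂ} {U : Set E} {m : ℝ} {z : E}
    (hU : Bornology.IsBounded U) (hf : DiffContOnCl ℂ f U) (hf₀ : ∀ x ∈ closure U, f x ≠ 0)
    (hm : ∀ x ∈ frontier U, m ≤ ‖f x‖) (hz : z ∈ closure U) : m ≤ ‖f z‖ := by
  rcases le_or_gt m 0 with hm₀ | hm₀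
  · exact hm₀.trans (norm_nonneg _)
  have hinv : ‖(f z)⁻¹‖ ≤ m⁻¹ :=
    Complex.norm_le_of_forall_mem_frontier_norm_le hU (hf.inv hf₀)
      (fun x hx ↦ by simpa using inv_anti₀ hm₀ (hm x hx)) hz
  rw [norm_inv] at hinv
  exact (inv_le_inv₀ (norm_pos_iff.2 (hf₀ z hz)) hm₀).1 hinv

variable {ι : Type*} {l : Filter ι} [l.NeBot] {F : ι → ℂ → ℂ} {f : ℂ → ℂ} {U : Set ℂ} {a : ℂ}

theorem eventually_eq_zero_of_tendstoLocallyUniformlyOn (hU : IsOpen U)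
    (hF : TendstoLocallyUniformlyOn F f l U) (hdiff : ∀ᶠ i in l, DifferentiableOn ℂ (F i) U)
    (hF₀ : ∀ᶠ i in l, ∀ z ∈ U, F i z ≠ 0) (ha : a ∈ U) (hfa : f a = 0) :
    ∀ᶠ z in 𝓝 a, f z = 0 := by
  have hf : DifferentiableOn ℂ f U := hF.differentiableOn hdiff hU
  refine (hf.analyticAt (hU.mem_nhds ha)).eventually_eq_zero_or_eventually_ne_zero.resolve_right
    fun hne ↦ ?_
  obtain ⟨r, hr, hrU⟩ := nhds_basis_closedBall.eventually_iff.1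
    ((eventually_nhdsWithin_iff.1 hne).and (hU.mem_nhds ha))
  have hsphere : sphere a r ⊆ U := fun z hz ↦ (hrU (sphere_subset_closedBall hz)).2
  obtain ⟨w, hw, hmin⟩ := (isCompact_sphere a r).exists_isMinOn
    (NormedSpace.sphere_nonempty.2 hr.le) (hf.continuousOn.mono hsphere).norm
  have hfw : 0 < ‖f w‖ := norm_pos_iff.2
    ((hrU (sphere_subset_closedBall hw)).1 (ne_of_mem_sphere hw hr.ne'))
  have hunif := (tendstoLocallyUniformlyOn_iff_forall_isCompact hU).1 hF _ hsphere
    (isCompact_sphere a r)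
  have hlower : ∀ᶠ i in l, ‖f w‖ / 2 ≤ ‖F i a‖ := by
    filter_upwards [hdiff, hF₀, Metric.tendstoUniformlyOn_iff.1 hunif _ (half_pos hfw)]
      with i hd h₀ hclose
    refine le_norm_of_forall_mem_frontier_le_norm isBounded_ball
      (hd.diffContOnCl_ball fun z hz ↦ (hrU hz).2) (fun z hz ↦ h₀ z ?_) (fun z hz ↦ ?_)
      (subset_closure (mem_ball_self hr))
    · exact (hrU (closure_ball_subset_closedBall hz)).2
    · rw [frontier_ball a hr.ne'] at hz
      have := hclose z hz
      rw [dist_eq_norm] at this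
      linarith [isMinOn_iff.1 hmin z hz, norm_sub_norm_le (f z) (F i z)]
  have hlim := ge_of_tendsto (hF.tendsto_at ha).norm hlower
  rw [hfa, norm_zero] at hlim
  linarith

end Hurwitz

/-- Univalent functions on a set of the complex plane: injective and holomorphic there. -/
structure IsUnivalentOn (f : ℂ → ℂ) (U : Set ℂ) : Prop where
  differentiableOn : DifferentiableOn ℂ f U
  injOn : InjOn f U

namespace IsUnivalentOn

variable {f g : ℂ → ℂ} {U V : Set ℂ} {a : ℂ}

theorem comp (hg : IsUnivalentOn g V) (hf : IsUnivalentOn f U) (hfUV : MapsTo f U V) :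
    IsUnivalentOn (g ∘ f) U :=
  ⟨hg.differentiableOn.comp hf.differentiableOn hfUV, hg.injOn.comp hf.injOn hfUV⟩

theorem conj_conj (hf : IsUnivalentOn f U) (hU : IsOpen U) (hsymm : MapsTo conj U U) :
    IsUnivalentOn (conj ∘ f ∘ conj) U where
  differentiableOn _ hz :=
    (differentiableAt_conj_conj_iff.2
      (hf.differentiableOn.differentiableAt (hU.mem_nhds (hsymm hz)))).differentiableWithinAt
  injOn := (starRingEnd ℂ).injective.comp_injOn
    (hf.injOn.comp (starRingEnd ℂ).injective.injOn hsymm)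

theorem not_eventually_eq (hf : IsUnivalentOn f U) (hU : IsOpen U) (ha : a ∈ U) :
    ¬∀ᶠ z in 𝓝 a, f z = f a := fun hconst ↦ by
  have hsingle : ∀ᶠ z in 𝓝 a, z = a := by
    filter_upwards [hconst, hU.mem_nhds ha] with z hz hzU using hf.injOn hzU ha hz
  exact (hsingle.filter_mono nhdsWithin_le_nhds).and (eventually_mem_nhdsWithin (s := {a}ᶜ))
    |>.exists.elim fun z hz ↦ hz.2 hz.1

theorem map_nhds_eq (hf : IsUnivalentOn f U) (hU : IsOpen U) (ha : a ∈ U) :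
    map f (𝓝 a) = 𝓝 (f a) :=
  have han : AnalyticAt ℂ f a := hf.differentiableOn.analyticAt (hU.mem_nhds ha)
  le_antisymm han.continuousAt
    (han.eventually_constant_or_nhds_le_map_nhds.resolve_left (hf.not_eventually_eq hU ha))

theorem isOpen_image (hf : IsUnivalentOn f U) (hU : IsOpen U) : IsOpen (f '' U) := by
  rw [isOpen_iff_mem_nhds]
  rintro _ ⟨z, hz, rfl⟩
  rw [← hf.map_nhds_eq hU hz]
  exact image_mem_map (hU.mem_nhds hz)

theorem eventually_invFunOn_eq (hf : IsUnivalentOn f U) (hU : IsOpen U) (ha : a ∈ U) :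
    ∀ᶠ z in 𝓝 a, invFunOn f U (f z) = z :=
  eventually_of_mem (hU.mem_nhds ha) fun _ hz ↦ hf.injOn.leftInvOn_invFunOn hz

theorem tendsto_invFunOn (hf : IsUnivalentOn f U) (hU : IsOpen U) (ha : a ∈ U) :
    Tendsto (invFunOn f U) (𝓝 (f a)) (𝓝 a) := by
  rw [← hf.map_nhds_eq hU ha, tendsto_map'_iff]
  exact tendsto_id.congr' ((hf.eventually_invFunOn_eq hU ha).mono fun _ ↦ Eq.symm)

theorem eventually_deriv_ne_zero (hf : IsUnivalentOn f U) (hU : IsOpen U) (ha : a ∈ U) :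
    ∀ᶠ z in 𝓝[≠] a, deriv f z ≠ 0 := by
  refine (hf.differentiableOn.analyticAt
    (hU.mem_nhds ha)).deriv.eventually_eq_zero_or_eventually_ne_zero.resolve_left fun hzero ↦ ?_
  obtain ⟨r, hr, hball⟩ := nhds_basis_ball.eventually_iff.1 (hzero.and (hU.mem_nhds ha))
  refine hf.not_eventually_eq hU ha (eventually_of_mem (ball_mem_nhds a hr) fun z hz ↦ ?_)
  exact isOpen_ball.is_const_of_deriv_eq_zero (convex_ball a r).isPreconnected
    (hf.differentiableOn.mono fun w hw ↦ (hball hw).2) (fun w hw ↦ (hball hw).1) hz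
    (mem_ball_self hr)

theorem differentiableAt_invFunOn (hf : IsUnivalentOn f U) (hU : IsOpen U) (ha : a ∈ U) :
    DifferentiableAt ℂ (invFunOn f U) (f a) := by
  have htendsto := hf.tendsto_invFunOn hU ha
  have hcont : ContinuousAt (invFunOn f U) (f a) := by
    rwa [ContinuousAt, hf.injOn.leftInvOn_invFunOn ha]
  refine (Complex.analyticAt_of_differentiable_on_punctured_nhds_of_continuousAt ?_
    hcont).differentiableAt
  rw [eventually_nhdsWithin_iff, ← hf.map_nhds_eq hU ha, eventually_map]
  filter_upwards [eventually_nhdsWithin_iff.1 (hf.eventually_deriv_ne_zero hU ha),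
    hU.mem_nhds ha] with z hz hzU hne
  have hstrict := (hf.differentiableOn.analyticAt (hU.mem_nhds hzU)).hasStrictDerivAt
  exact (hstrict.to_local_left_inverse (hz (ne_of_apply_ne f hne))
    (hf.eventually_invFunOn_eq hU hzU)).hasDerivAt.differentiableAt

theorem differentiableOn_invFunOn (hf : IsUnivalentOn f U) (hU : IsOpen U) :
    DifferentiableOn ℂ (invFunOn f U) (f '' U) := by
  rintro _ ⟨z, hz, rfl⟩
  exact (hf.differentiableAt_invFunOn hU hz).differentiableWithinAt

theorem deriv_ne_zero (hf : IsUnivalentOn f U) (hU : IsOpen U) (ha : a ∈ U) :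
    deriv f a ≠ 0 := by
  have hcomp := (hf.differentiableAt_invFunOn hU ha).hasDerivAt.comp a
    (hf.differentiableOn.differentiableAt (hU.mem_nhds ha)).hasDerivAt
  have hone := hcomp.unique ((hasDerivAt_id a).congr_of_eventuallyEq
    (hf.eventually_invFunOn_eq hU ha))
  exact right_ne_zero_of_mul_eq_one hone

end IsUnivalentOn

section Limit

variable {ι : Type*} {l : Filter ι} [l.NeBot] {F : ι → ℂ → ℂ} {f : ℂ → ℂ} {U : Set ℂ} {a : ℂ}

theorem IsUnivalentOn.of_tendstoLocallyUniformlyOn (hU : IsOpen U) (hconn : IsPreconnected U)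
    (hF : TendstoLocallyUniformlyOn F f l U) (hFU : ∀ᶠ i in l, IsUnivalentOn (F i) U)
    (ha : a ∈ U) (hfa : deriv f a ≠ 0) : IsUnivalentOn f U := by
  have hdiff := hF.differentiableOn (hFU.mono fun _ h ↦ h.differentiableOn) hU
  refine ⟨hdiff, fun z hz b hb hzb ↦ by_contra fun hne : z ≠ b ↦ hfa ?_⟩
  have hlim : TendstoLocallyUniformlyOn (fun i w ↦ F i w - F i b) (fun w ↦ f w - f b) l
      (U \ {b}) :=
    (hF.mono sdiff_subset).fun_sub
      ((hF.tendsto_at hb).tendstoUniformlyOn_const _).tendstoLocallyUniformlyOn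
  have hzero : ∀ᶠ w in 𝓝 z, f w - f b = 0 :=
    eventually_eq_zero_of_tendstoLocallyUniformlyOn (hU.sdiff isClosed_singleton) hlim
      (hFU.mono fun i h ↦ (h.differentiableOn.mono sdiff_subset).sub_const _)
      (hFU.mono fun i h w hw ↦ sub_ne_zero.2 fun hwb ↦ hw.2 (h.injOn hw.1 hb hwb))
      ⟨hz, hne⟩ (sub_eq_zero.2 hzb)
  have hconst : EqOn (fun w ↦ f w - f b) 0 U :=
    ((hdiff.sub_const _).analyticOnNhd hU).eqOn_zero_of_preconnected_of_eventuallyEq_zero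
      hconn hz hzero
  rw [← deriv_sub_const (f b), (hconst.eventuallyEq_of_mem (hU.mem_nhds ha)).deriv_eq]
  simp

end Limit

section SquareRoot

theorem differentiableAt_of_differentiableAt_comp {𝕜 : Type*} [NontriviallyNormedField 𝕜]
    [CompleteSpace 𝕜] {p h : 𝕜 → 𝕜} {p' z : 𝕜} (hp : HasStrictDerivAt p p' (h z)) (hp' : p' ≠ 0)
    (hh : ContinuousAt h z) (hph : DifferentiableAt 𝕜 (p ∘ h) z) : DifferentiableAt 𝕜 h z :=
  ((hp.to_localInverse hp').hasDerivAt.differentiableAt.comp z hph).congr_of_eventuallyEq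
    ((hh.eventually (hp.eventually_left_inverse hp')).mono fun _ ↦ Eq.symm)

theorem IsUnivalentOn.exists_sq_eq {g : ℂ → ℂ} {U : Set ℂ} (hg : IsUnivalentOn g U)
    (hU : IsOpen U) (hsc : IsSimplyConnected U) (hg₀ : ∀ z ∈ U, g z ≠ 0) :
    ∃ h : ℂ → ℂ, IsUnivalentOn h U ∧ ∀ z, h z ^ 2 = g z := by
  obtain ⟨h, hcont, hsq⟩ := Complex.exists_continuousOn_pow_eq hsc hU
    hg.differentiableOn.continuousOn (fun ⟨z, hz, hgz⟩ ↦ hg₀ z hz hgz) two_ne_zero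
  refine ⟨h, ⟨fun z hz ↦ DifferentiableAt.differentiableWithinAt ?_, ?_⟩, hsq⟩
  · have hhz : h z ≠ 0 := fun h₀ ↦ hg₀ z hz (by simp [← hsq, h₀])
    have hcomp : (fun x ↦ x ^ 2) ∘ h = g := funext hsq
    exact differentiableAt_of_differentiableAt_comp (hasStrictDerivAt_pow 2 (h z))
      (by simpa using hhz) (hcont.continuousAt (hU.mem_nhds hz))
      (hcomp ▸ hg.differentiableOn.differentiableAt (hU.mem_nhds hz))
  · exact fun z hz w hw hzw ↦ hg.injOn hz hw (by rw [← hsq, ← hsq, hzw])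

end SquareRoot

/-- The automorphism `z ↦ (z - w) / (1 - conj w * z)` of the unit disc, for `w` in the disc; it
moves `w` to the origin. -/
noncomputable def discAutomorphism (w z : ℂ) : ℂ := (z - w) / (1 - conj w * z)

section DiscAutomorphism

variable {w z : ℂ}

@[simp]
theorem discAutomorphism_self (w : ℂ) : discAutomorphism w w = 0 := by simp [discAutomorphism]

@[simp]
theorem discAutomorphism_zero (w : ℂ) : discAutomorphism w 0 = -w := by simp [discAutomorphism]

theorem one_sub_conj_mul_ne_zero (hw : w ∈ ball (0 : ℂ) 1) (hz : z ∈ ball (0 : ℂ) 1) :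
    1 - conj w * z ≠ 0 := by
  rw [mem_ball_zero_iff] at hw hz
  refine sub_ne_zero.2 fun h ↦ ?_
  have hnorm : ‖w‖ * ‖z‖ = 1 := by rw [← Complex.norm_conj, ← norm_mul, ← h, norm_one]
  exact (mul_lt_one_of_nonneg_of_lt_one_left (norm_nonneg w) hw hz.le).ne hnorm

theorem sq_norm_one_sub_conj_mul (w z : ℂ) :
    ‖1 - conj w * z‖ ^ 2 = ‖z - w‖ ^ 2 + (1 - ‖w‖ ^ 2) * (1 - ‖z‖ ^ 2) := by
  simp only [Complex.sq_norm, Complex.normSq_apply, Complex.sub_re, Complex.sub_im,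
    Complex.mul_re, Complex.mul_im, Complex.conj_re, Complex.conj_im, Complex.one_re,
    Complex.one_im]
  ring

theorem mapsTo_discAutomorphism (hw : w ∈ ball (0 : ℂ) 1) :
    MapsTo (discAutomorphism w) (ball 0 1) (ball 0 1) := fun z hz ↦ by
  have hne := norm_pos_iff.2 (one_sub_conj_mul_ne_zero hw hz)
  rw [mem_ball_zero_iff] at hw hz
  rw [mem_ball_zero_iff, discAutomorphism, norm_div, div_lt_one hne, ← sq_lt_sq₀ (norm_nonneg _)
    hne.le, sq_norm_one_sub_conj_mul]
  have hgap : 0 < (1 - ‖w‖ ^ 2) * (1 - ‖z‖ ^ 2) :=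
    mul_pos (sub_pos.2 ((sq_lt_one_iff₀ (norm_nonneg w)).2 hw))
      (sub_pos.2 ((sq_lt_one_iff₀ (norm_nonneg z)).2 hz))
  linarith

theorem discAutomorphism_neg_discAutomorphism (hw : w ∈ ball (0 : ℂ) 1)
    (hz : z ∈ ball (0 : ℂ) 1) : discAutomorphism (-w) (discAutomorphism w z) = z := by
  have hzne := one_sub_conj_mul_ne_zero hw hz
  have hwne := one_sub_conj_mul_ne_zero hw hw
  have hnum : discAutomorphism w z + w = z * (1 - conj w * w) / (1 - conj w * z) := by
    rw [discAutomorphism, div_add' _ _ _ hzne]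
    ring
  have hden : 1 + conj w * discAutomorphism w z = (1 - conj w * w) / (1 - conj w * z) := by
    rw [discAutomorphism, mul_div_assoc', add_div' _ _ _ hzne]
    ring
  rw [discAutomorphism, map_neg, neg_mul, sub_neg_eq_add, sub_neg_eq_add, hnum, hden,
    div_div_div_cancel_right₀ hzne, mul_div_cancel_right₀ _ hwne]

theorem isUnivalentOn_discAutomorphism (hw : w ∈ ball (0 : ℂ) 1) :
    IsUnivalentOn (discAutomorphism w) (ball 0 1) where
  differentiableOn := by
    refine DifferentiableOn.div (by fun_prop) (by fun_prop) fun z hz ↦ ?_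
    exact one_sub_conj_mul_ne_zero hw hz
  injOn := LeftInvOn.injOn (f₁' := discAutomorphism (-w)) fun _ hz ↦
    discAutomorphism_neg_discAutomorphism hw hz

end DiscAutomorphism

/-- Univalent maps of `U` into the unit disc sending the base point `x₀` to the origin: the
competitors in the extremal problem that produces the Riemann map. -/
structure IsDiscEmbedding (f : ℂ → ℂ) (U : Set ℂ) (x₀ : ℂ) : Prop extends IsUnivalentOn f U where
  mapsTo : MapsTo f U (ball 0 1)
  map_base : f x₀ = 0

section InitialEmbedding

variable {f : ℂ → ℂ} {U : Set ℂ} {x₀ : ℂ}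

theorem IsUnivalentOn.isDiscEmbedding_discAutomorphism_comp (hf : IsUnivalentOn f U)
    (hfU : MapsTo f U (ball 0 1)) (hx₀ : x₀ ∈ U) :
    IsDiscEmbedding (discAutomorphism (f x₀) ∘ f) U x₀ where
  toIsUnivalentOn := (isUnivalentOn_discAutomorphism (hfU hx₀)).comp hf hfU
  mapsTo := (mapsTo_discAutomorphism (hfU hx₀)).comp hfU
  map_base := discAutomorphism_self _

theorem IsUnivalentOn.exists_isDiscEmbedding_of_le_dist {r : ℝ} {c : ℂ} (hf : IsUnivalentOn f U)
    (hx₀ : x₀ ∈ U) (hr : 0 < r) (hfc : ∀ z ∈ U, r ≤ dist (f z) c) :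
    ∃ g, IsDiscEmbedding g U x₀ := by
  have hpos : ∀ z ∈ U, 0 < ‖f z - c‖ := fun z hz ↦ hr.trans_le (dist_eq_norm (f z) c ▸ hfc z hz)
  have hne : ∀ z ∈ U, f z - c ≠ 0 := fun z hz ↦ norm_pos_iff.1 (hpos z hz)
  have hr₀ : (r / 2 : ℂ) ≠ 0 := by simpa using hr.ne'
  have huniv : IsUnivalentOn (fun z ↦ (r / 2 : ℂ) * (f z - c)⁻¹) U :=
    ⟨((hf.differentiableOn.sub_const c).inv hne).const_mul _, fun z hz w hw hzw ↦
      hf.injOn hz hw (sub_left_injective (inv_injective (mul_left_cancel₀ hr₀ hzw)))⟩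
  refine ⟨_, huniv.isDiscEmbedding_discAutomorphism_comp (fun z hz ↦ ?_) hx₀⟩
  have hhalf : ‖(r / 2 : ℂ)‖ = r / 2 := by simp [abs_of_pos hr]
  rw [mem_ball_zero_iff, norm_mul, norm_inv, hhalf, ← div_eq_mul_inv, div_lt_one (hpos z hz),
    ← dist_eq_norm]
  exact (half_lt_self hr).trans_le (hfc z hz)

theorem exists_isDiscEmbedding (hU : IsOpen U) (hsc : IsSimplyConnected U) (hne : U ≠ univ)
    (hx₀ : x₀ ∈ U) : ∃ f, IsDiscEmbedding f U x₀ := by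
  obtain ⟨a, ha⟩ := (ne_univ_iff_exists_notMem U).1 hne
  have hsub : IsUnivalentOn (· - a) U :=
    ⟨differentiableOn_id.sub_const a, sub_left_injective.injOn⟩
  obtain ⟨h, hh, hsq⟩ := hsub.exists_sq_eq hU hsc fun z hz ↦
    sub_ne_zero.2 (ne_of_mem_of_not_mem hz ha)
  -- A square root of `z - a` never takes opposite values, so `h '' U` misses a disc around `-h x₀`.
  have hopp : ∀ z ∈ U, ∀ w ∈ U, h z ≠ -h w := fun z hz w hw hzw ↦ by
    obtain rfl : z = w := hsub.injOn hz hw (by simp only [← hsq, hzw, neg_sq])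
    have hz₀ : h z = 0 := by linear_combination hzw / 2
    exact ne_of_mem_of_not_mem hz ha (sub_eq_zero.1 (by rw [← hsq z, hz₀]; simp))
  obtain ⟨r, hr, hball⟩ := Metric.isOpen_iff.1 (hh.isOpen_image hU) _ (mem_image_of_mem h hx₀)
  refine hh.exists_isDiscEmbedding_of_le_dist (c := -h x₀) hx₀ hr fun z hz ↦ ?_
  by_contra! hlt
  obtain ⟨w, hw, hwz⟩ := hball (show -h z ∈ ball (h x₀) r by
    rwa [mem_ball, ← neg_neg (h x₀), dist_neg_neg])
  exact hopp w hw z hz hwz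

end InitialEmbedding

section Montel

variable {ι : Type*}

theorem tendstoLocallyUniformlyOn_of_equicontinuousOn {X α : Type*} [TopologicalSpace X]
    [LocallyCompactSpace X] [UniformSpace α] {F : ι → X → α} {f : X → α} {l : Filter ι}
    {U : Set X} (hU : IsOpen U) (hF : EquicontinuousOn F U)
    (hlim : ∀ x ∈ U, Tendsto (F · x) l (𝓝 (f x))) : TendstoLocallyUniformlyOn F f l U := by
  refine (tendstoLocallyUniformlyOn_iff_forall_isCompact hU).2 fun K hKU hK ↦ ?_
  have huniform := (EquicontinuousOn.tendsto_uniformOnFun_iff_pi' (𝔖 := {K}) (by simpa using hK)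
    (by simpa using hF.mono hKU) l f).2
    (tendsto_pi_nhds.2 fun x ↦ hlim x (hKU (by simpa using x.2)))
  exact UniformOnFun.tendsto_iff_tendstoUniformlyOn.1 huniform K rfl

theorem equicontinuousOn_of_forall_norm_le {E G : Type*} [NormedAddCommGroup E] [NormedSpace ℂ E]
    [NormedAddCommGroup G] [NormedSpace ℂ G] {F : ι → E → G} {U : Set E} {R : ℝ} (hU : IsOpen U)
    (hdiff : ∀ i, DifferentiableOn ℂ (F i) U) (hbdd : ∀ i, ∀ z ∈ U, ‖F i z‖ ≤ R) :
    EquicontinuousOn F U := fun z hz ↦ by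
  obtain ⟨r, hr, hball⟩ := Metric.isOpen_iff.1 hU z hz
  have hmodulus : Tendsto (fun w ↦ (R + R) / r * dist w z) (𝓝 z) (𝓝 0) := by
    have hcont : Continuous fun w ↦ (R + R) / r * dist w z := by fun_prop
    simpa using hcont.tendsto z
  refine (Metric.equicontinuousAt_of_continuity_modulus _ hmodulus F
    (eventually_of_mem (ball_mem_nhds z hr) fun w hw i ↦ ?_)).equicontinuousWithinAt U
  rw [dist_comm]
  refine Complex.dist_le_div_mul_dist_of_mapsTo_ball ((hdiff i).mono hball) (fun v hv ↦ ?_) hw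
  exact (dist_le_norm_add_norm _ _).trans (add_le_add (hbdd i v (hball hv)) (hbdd i z hz))

theorem exists_tendstoLocallyUniformlyOn_of_forall_norm_le {E G : Type*} [NormedAddCommGroup E]
    [NormedSpace ℂ E] [LocallyCompactSpace E] [NormedAddCommGroup G] [NormedSpace ℂ G]
    [ProperSpace G] {F : ι → E → G} {U : Set E} {R : ℝ} (l : Ultrafilter ι) (hU : IsOpen U)
    (hdiff : ∀ i, DifferentiableOn ℂ (F i) U) (hbdd : ∀ i, ∀ z ∈ U, ‖F i z‖ ≤ R) :
    ∃ f, TendstoLocallyUniformlyOn F f l U := by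
  have hlim : ∀ z, ∃ y, z ∈ U → Tendsto (F · z) l (𝓝 y) := fun z ↦ by
    by_cases hz : z ∈ U
    · obtain ⟨y, -, hy⟩ := (isCompact_closedBall (0 : G) R).ultrafilter_le_nhds (l.map (F · z))
        (le_principal_iff.2 (mem_map.2 (univ_mem' fun i ↦ by simpa using hbdd i z hz)))
      exact ⟨y, fun _ ↦ hy⟩
    · exact ⟨0, fun h ↦ absurd h hz⟩
  choose f hf using hlim
  exact ⟨f, tendstoLocallyUniformlyOn_of_equicontinuousOn hU
    (equicontinuousOn_of_forall_norm_le hU hdiff hbdd) hf⟩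

end Montel

section Extremal

variable {U : Set ℂ} {x₀ : ℂ}

theorem IsDiscEmbedding.of_tendstoLocallyUniformlyOn {ι : Type*} {l : Filter ι} [l.NeBot]
    {F : ι → ℂ → ℂ} {f : ℂ → ℂ} (hU : IsOpen U) (hconn : IsPreconnected U)
    (hF : TendstoLocallyUniformlyOn F f l U) (hFU : ∀ i, IsDiscEmbedding (F i) U x₀)
    (hx₀ : x₀ ∈ U) (hfx₀ : deriv f x₀ ≠ 0) : IsDiscEmbedding f U x₀ := by
  have hf : IsUnivalentOn f U := .of_tendstoLocallyUniformlyOn hU hconn hF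
    (.of_forall fun i ↦ (hFU i).toIsUnivalentOn) hx₀ hfx₀
  have hclosed : f '' U ⊆ closedBall 0 1 := by
    rintro _ ⟨z, hz, rfl⟩
    exact isClosed_closedBall.mem_of_tendsto (hF.tendsto_at hz)
      (.of_forall fun i ↦ ball_subset_closedBall ((hFU i).mapsTo hz))
  refine ⟨hf, mapsTo_iff_image_subset.2 ?_, tendsto_nhds_unique (hF.tendsto_at hx₀) ?_⟩
  · rw [← interior_closedBall (0 : ℂ) one_ne_zero]
    exact interior_maximal hclosed (hf.isOpen_image hU)
  · simp [(hFU _).map_base]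

theorem bddAbove_norm_deriv_isDiscEmbedding (hU : IsOpen U) (hx₀ : x₀ ∈ U) :
    BddAbove ((fun f ↦ ‖deriv f x₀‖) '' {f | IsDiscEmbedding f U x₀}) := by
  obtain ⟨r, hr, hball⟩ := Metric.isOpen_iff.1 hU x₀ hx₀
  refine ⟨1 / r, forall_mem_image.2 fun f hf ↦ ?_⟩
  refine Complex.norm_deriv_le_div_of_mapsTo_ball (hf.differentiableOn.mono hball) ?_ hr
  rw [hf.map_base]
  exact (hf.mapsTo.mono_left hball).mono_right ball_subset_closedBall

theorem exists_isDiscEmbedding_forall_norm_deriv_le (hU : IsOpen U) (hconn : IsPreconnected U)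
    (hx₀ : x₀ ∈ U) (hne : ∃ f, IsDiscEmbedding f U x₀) :
    ∃ f, IsDiscEmbedding f U x₀ ∧
      ∀ g, IsDiscEmbedding g U x₀ → ‖deriv g x₀‖ ≤ ‖deriv f x₀‖ := by
  set S := (fun f ↦ ‖deriv f x₀‖) '' {f | IsDiscEmbedding f U x₀}
  have hbdd : BddAbove S := bddAbove_norm_deriv_isDiscEmbedding hU hx₀
  obtain ⟨g, hg⟩ := hne
  obtain ⟨u, -, hu, huS⟩ := exists_seq_tendsto_sSup (S := S) ⟨_, g, hg, rfl⟩ hbdd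
  choose F hF hFu using huS
  obtain ⟨f, hf⟩ := exists_tendstoLocallyUniformlyOn_of_forall_norm_le (hyperfilter ℕ) hU
    (fun n ↦ (hF n).differentiableOn) fun n z hz ↦ (mem_ball_zero_iff.1 ((hF n).mapsTo hz)).le
  have hderiv : ‖deriv f x₀‖ = sSup S := by
    refine tendsto_nhds_unique ?_ (hu.mono_left Nat.hyperfilter_le_atTop)
    simpa only [Function.comp_apply, hFu] using
      ((hf.deriv (.of_forall fun n ↦ (hF n).differentiableOn) hU).tendsto_at hx₀).norm
  have hmax : ∀ g, IsDiscEmbedding g U x₀ → ‖deriv g x₀‖ ≤ ‖deriv f x₀‖ := fun g hg ↦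
    hderiv ▸ le_csSup hbdd (mem_image_of_mem _ hg)
  have hpos : 0 < ‖deriv f x₀‖ :=
    (norm_pos_iff.2 (hg.toIsUnivalentOn.deriv_ne_zero hU hx₀)).trans_le (hmax g hg)
  exact ⟨f, .of_tendstoLocallyUniformlyOn hU hconn hf hF hx₀ (norm_pos_iff.1 hpos), hmax⟩

end Extremal

section Koebe

theorem norm_deriv_lt_div_of_mapsTo_ball_of_not_injOn {E : Type*} [NormedAddCommGroup E]
    [NormedSpace ℂ E] [StrictConvexSpace ℝ E] {f : ℂ → E} {c : ℂ} {R₁ R₂ : ℝ}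
    (hd : DifferentiableOn ℂ f (ball c R₁)) (hmaps : MapsTo f (ball c R₁) (closedBall (f c) R₂))
    (hR₁ : 0 < R₁) (hR₂ : 0 < R₂) (hinj : ¬InjOn f (ball c R₁)) : ‖deriv f c‖ < R₂ / R₁ := by
  refine (Complex.norm_deriv_le_div_of_mapsTo_ball hd hmaps hR₁).lt_of_ne fun heq ↦ hinj ?_
  have haffine := Complex.affine_of_mapsTo_ball_of_norm_dslope_eq_div hd hmaps
    (mem_ball_self hR₁) (by rwa [dslope_same])
  have hslope : dslope f c c ≠ 0 := by
    rw [dslope_same, ← norm_pos_iff, heq]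
    positivity
  refine InjOn.congr (fun z _ w _ hzw ↦ ?_) haffine.symm
  exact sub_left_injective (smul_left_injective ℂ hslope (add_left_cancel hzw))

/-- The self-map of the unit disc obtained from squaring by moving `-b` to the origin in the
source and `b ^ 2` to the origin in the target. -/
noncomputable def conjugatedSquare (b : ℂ) : ℂ → ℂ :=
  discAutomorphism (b ^ 2) ∘ (· ^ 2) ∘ discAutomorphism (-b)

variable {b : ℂ}

theorem mapsTo_sq_ball : MapsTo (fun z : ℂ ↦ z ^ 2) (ball 0 1) (ball 0 1) := fun z hz ↦ by
  rw [mem_ball_zero_iff] at hz ⊢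
  rw [norm_pow]
  exact pow_lt_one₀ (norm_nonneg z) hz two_ne_zero

theorem conjugatedSquare_zero (b : ℂ) : conjugatedSquare b 0 = 0 := by simp [conjugatedSquare]

theorem mapsTo_conjugatedSquare (hb : b ∈ ball (0 : ℂ) 1) :
    MapsTo (conjugatedSquare b) (ball 0 1) (ball 0 1) :=
  (mapsTo_discAutomorphism (mapsTo_sq_ball hb)).comp
    (mapsTo_sq_ball.comp (mapsTo_discAutomorphism (by simpa using hb)))

theorem differentiableOn_conjugatedSquare (hb : b ∈ ball (0 : ℂ) 1) :
    DifferentiableOn ℂ (conjugatedSquare b) (ball 0 1) := by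
  have hb' : -b ∈ ball (0 : ℂ) 1 := by simpa using hb
  exact (isUnivalentOn_discAutomorphism (mapsTo_sq_ball hb)).differentiableOn.comp
    ((isUnivalentOn_discAutomorphism hb').differentiableOn.pow 2)
    (mapsTo_sq_ball.comp (mapsTo_discAutomorphism hb'))

theorem conjugatedSquare_discAutomorphism {z : ℂ} (hb : b ∈ ball (0 : ℂ) 1)
    (hz : z ∈ ball (0 : ℂ) 1) :
    conjugatedSquare b (discAutomorphism b z) = discAutomorphism (b ^ 2) (z ^ 2) := by
  simp only [conjugatedSquare, Function.comp_apply, discAutomorphism_neg_discAutomorphism hb hz]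

theorem not_injOn_conjugatedSquare (hb : b ∈ ball (0 : ℂ) 1) :
    ¬InjOn (conjugatedSquare b) (ball 0 1) := fun hinj ↦ by
  have hhalf : (1 / 2 : ℂ) ∈ ball (0 : ℂ) 1 := by rw [mem_ball_zero_iff]; norm_num
  have hneg : (-(1 / 2) : ℂ) ∈ ball (0 : ℂ) 1 := by rw [mem_ball_zero_iff]; norm_num
  have hmaps := mapsTo_discAutomorphism hb
  have heq := (isUnivalentOn_discAutomorphism hb).injOn hhalf hneg
    (hinj (hmaps hhalf) (hmaps hneg) (by
      rw [conjugatedSquare_discAutomorphism hb hhalf, conjugatedSquare_discAutomorphism hb hneg,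
        neg_sq]))
  norm_num at heq

theorem norm_deriv_conjugatedSquare_lt_one (hb : b ∈ ball (0 : ℂ) 1) :
    ‖deriv (conjugatedSquare b) 0‖ < 1 := by
  rw [← div_one (1 : ℝ)]
  refine norm_deriv_lt_div_of_mapsTo_ball_of_not_injOn (differentiableOn_conjugatedSquare hb) ?_
    one_pos one_pos (not_injOn_conjugatedSquare hb)
  rw [conjugatedSquare_zero]
  exact (mapsTo_conjugatedSquare hb).mono_right ball_subset_closedBall

-- Koebe's trick: `f` factors through `F` by a self-map of the disc that fixes the origin and is not
-- injective, so the Schwarz lemma is strict for it.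
theorem IsDiscEmbedding.exists_norm_deriv_lt {f : ℂ → ℂ} {U : Set ℂ} {x₀ w : ℂ}
    (hf : IsDiscEmbedding f U x₀) (hU : IsOpen U) (hsc : IsSimplyConnected U) (hx₀ : x₀ ∈ U)
    (hw : w ∈ ball (0 : ℂ) 1) (hfw : w ∉ f '' U) :
    ∃ F, IsDiscEmbedding F U x₀ ∧ ‖deriv f x₀‖ < ‖deriv F x₀‖ := by
  have hφ := isUnivalentOn_discAutomorphism hw
  obtain ⟨h, hh, hsq⟩ := (hφ.comp hf.toIsUnivalentOn hf.mapsTo).exists_sq_eq hU hsc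
    fun z hz hzero ↦ hfw ⟨z, hz, hφ.injOn (hf.mapsTo hz) hw
      (hzero.trans (discAutomorphism_self w).symm)⟩
  have hmaps : MapsTo h U (ball 0 1) := fun z hz ↦ by
    have hlt := mapsTo_discAutomorphism hw (hf.mapsTo hz)
    rw [← Function.comp_apply (f := discAutomorphism w), ← hsq, mem_ball_zero_iff, norm_pow] at hlt
    exact mem_ball_zero_iff.2 ((pow_lt_one_iff_of_nonneg (norm_nonneg _) two_ne_zero).1 hlt)
  have hF := hh.isDiscEmbedding_discAutomorphism_comp hmaps hx₀
  set b := h x₀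
  have hb : b ∈ ball (0 : ℂ) 1 := hmaps hx₀
  have hbw : b ^ 2 = -w := by rw [hsq, Function.comp_apply, hf.map_base, discAutomorphism_zero]
  have hfactor : EqOn f (conjugatedSquare b ∘ discAutomorphism b ∘ h) U := fun z hz ↦ by
    simp only [Function.comp_apply, conjugatedSquare_discAutomorphism hb (hmaps hz), hsq, hbw,
      discAutomorphism_neg_discAutomorphism hw (hf.mapsTo hz)]
  have hderiv : deriv f x₀ = deriv (conjugatedSquare b) 0 * deriv (discAutomorphism b ∘ h) x₀ := by
    rw [(hfactor.eventuallyEq_of_mem (hU.mem_nhds hx₀)).deriv_eq,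
      deriv_comp _ _ (hF.differentiableOn.differentiableAt (hU.mem_nhds hx₀)), hF.map_base]
    rw [hF.map_base]
    exact (differentiableOn_conjugatedSquare hb).differentiableAt (ball_mem_nhds 0 one_pos)
  refine ⟨_, hF, ?_⟩
  rw [hderiv, norm_mul]
  exact mul_lt_of_lt_one_left (norm_pos_iff.2 (hF.toIsUnivalentOn.deriv_ne_zero hU hx₀))
    (norm_deriv_conjugatedSquare_lt_one hb)

end Koebe

/-- Riemann maps of `U` pointed at `x₀`: biholomorphic maps of `U` onto the unit disc sending `x₀`
to the origin. -/
structure IsRiemannMap (f : ℂ → ℂ) (U : Set ℂ) (x₀ : ℂ) : Prop extends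
    IsDiscEmbedding f U x₀ where
  surjOn : SurjOn f U (ball 0 1)

section RiemannMapping

variable {f g : ℂ → ℂ} {U : Set ℂ} {x₀ : ℂ}

theorem exists_isRiemannMap (hU : IsOpen U) (hsc : IsSimplyConnected U) (hne : U ≠ univ)
    (hx₀ : x₀ ∈ U) : ∃ f, IsRiemannMap f U x₀ := by
  obtain ⟨f, hf, hmax⟩ := exists_isDiscEmbedding_forall_norm_deriv_le hU
    hsc.isPathConnected.isConnected.isPreconnected hx₀ (exists_isDiscEmbedding hU hsc hne hx₀)
  refine ⟨f, hf, fun w hw ↦ by_contra fun hfw ↦ ?_⟩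
  obtain ⟨F, hF, hlt⟩ := hf.exists_norm_deriv_lt hU hsc hx₀ hw hfw
  exact (hmax F hF).not_gt hlt

theorem exists_eqOn_smul_of_forall_norm_eq {E : Type*} [NormedAddCommGroup E] [NormedSpace ℂ E]
    [StrictConvexSpace ℝ E] {f : ℂ → E} {R : ℝ} (hR : 0 < R)
    (hd : DifferentiableOn ℂ f (ball 0 R)) (hnorm : ∀ z ∈ ball (0 : ℂ) R, ‖f z‖ = ‖z‖) :
    ∃ C : E, EqOn f (· • C) (ball 0 R) := by
  have hf₀ : f 0 = 0 := by simpa using hnorm 0 (mem_ball_self hR)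
  have hmaps : MapsTo f (ball 0 R) (closedBall (f 0) R) := fun z hz ↦ by
    rw [hf₀, mem_closedBall_zero_iff, hnorm z hz]
    exact (mem_ball_zero_iff.1 hz).le
  have hhalf : (R / 2 : ℂ) ∈ ball (0 : ℂ) R := by simpa [abs_of_pos hR] using half_lt_self hR
  have hne : (R / 2 : ℂ) ≠ 0 := by simpa using hR.ne'
  have hslope : ‖dslope f 0 (R / 2)‖ = R / R := by
    rw [dslope_of_ne _ hne, slope_def_module, hf₀, sub_zero, sub_zero, norm_smul, norm_inv,
      hnorm _ hhalf, inv_mul_cancel₀ (norm_ne_zero_iff.2 hne), div_self hR.ne']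
  have haffine := Complex.affine_of_mapsTo_ball_of_norm_dslope_eq_div hd hmaps hhalf hslope
  exact ⟨_, fun z hz ↦ by simpa [hf₀] using haffine hz⟩

namespace IsRiemannMap

theorem image_eq (hf : IsRiemannMap f U x₀) : f '' U = ball 0 1 :=
  hf.surjOn.image_eq_of_mapsTo hf.mapsTo

theorem norm_le_norm (hf : IsRiemannMap f U x₀) (hg : IsDiscEmbedding g U x₀) (hU : IsOpen U)
    (hx₀ : x₀ ∈ U) {z : ℂ} (hz : z ∈ U) : ‖g z‖ ≤ ‖f z‖ := by
  have hinv := hf.injOn.leftInvOn_invFunOn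
  have hmaps : MapsTo (invFunOn f U) (ball 0 1) U := hf.surjOn.mapsTo_invFunOn
  have hzero : (g ∘ invFunOn f U) 0 = 0 := by
    rw [← hf.map_base, Function.comp_apply, hinv hx₀, hg.map_base, hf.map_base]
  have hle := Complex.norm_le_norm_of_mapsTo_ball
    (hg.differentiableOn.comp (hf.image_eq ▸ hf.differentiableOn_invFunOn hU) hmaps)
    ((hg.mapsTo.comp hmaps).mono_right ball_subset_closedBall) hzero
    (mem_ball_zero_iff.1 (hf.mapsTo hz))
  rwa [Function.comp_apply, hinv hz] at hle

theorem norm_eq_norm (hf : IsRiemannMap f U x₀) (hg : IsRiemannMap g U x₀) (hU : IsOpen U)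
    (hx₀ : x₀ ∈ U) {z : ℂ} (hz : z ∈ U) : ‖g z‖ = ‖f z‖ :=
  (hf.norm_le_norm hg.toIsDiscEmbedding hU hx₀ hz).antisymm
    (hg.norm_le_norm hf.toIsDiscEmbedding hU hx₀ hz)

theorem exists_eq_mul (hf : IsRiemannMap f U x₀) (hg : IsRiemannMap g U x₀) (hU : IsOpen U)
    (hx₀ : x₀ ∈ U) : ∃ c, ∀ z ∈ U, g z = c * f z := by
  have hinv := hf.injOn.leftInvOn_invFunOn
  have hmaps : MapsTo (invFunOn f U) (ball 0 1) U := hf.surjOn.mapsTo_invFunOn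
  obtain ⟨c, hc⟩ := exists_eqOn_smul_of_forall_norm_eq one_pos (f := g ∘ invFunOn f U)
    (hg.differentiableOn.comp (hf.image_eq ▸ hf.differentiableOn_invFunOn hU) hmaps)
    fun w hw ↦ by
      rw [Function.comp_apply, hf.norm_eq_norm hg hU hx₀ (hmaps hw),
        hf.surjOn.rightInvOn_invFunOn hw]
  refine ⟨c, fun z hz ↦ ?_⟩
  simpa [hinv hz, mul_comm] using hc (hf.mapsTo hz)

theorem conj_conj (hf : IsRiemannMap f U x₀) (hU : IsOpen U) (hsymm : MapsTo conj U U)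
    (hx₀ : conj x₀ = x₀) : IsRiemannMap (conj ∘ f ∘ conj) U x₀ where
  toIsUnivalentOn := hf.toIsUnivalentOn.conj_conj hU hsymm
  mapsTo z hz := by simpa using hf.mapsTo (hsymm hz)
  map_base := by simp [hx₀, hf.map_base]
  surjOn w hw := by
    obtain ⟨z, hz, hzw⟩ := hf.surjOn (show conj w ∈ ball (0 : ℂ) 1 by simpa using hw)
    exact ⟨conj z, hsymm hz, by simp [hzw]⟩

theorem conj_inv_deriv_mul (hf : IsRiemannMap f U x₀) (hU : IsOpen U) (hsymm : MapsTo conj U U)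
    (hx₀U : x₀ ∈ U) (hx₀ : conj x₀ = x₀) {z : ℂ} (hz : z ∈ U) :
    (deriv f x₀)⁻¹ * f (conj z) = conj ((deriv f x₀)⁻¹ * f z) := by
  obtain ⟨c, hc⟩ := hf.exists_eq_mul (hf.conj_conj hU hsymm hx₀) hU hx₀U
  have hderiv : conj (deriv f x₀) = c * deriv f x₀ := by
    have heq : EqOn (conj ∘ f ∘ conj) (fun z ↦ c * f z) U := hc
    have hderivEq := (heq.eventuallyEq_of_mem (hU.mem_nhds hx₀U)).deriv_eq
    rwa [deriv_conj_conj, Function.comp_apply, Function.comp_apply, hx₀,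
      deriv_const_mul_field] at hderivEq
  have hne : conj (deriv f x₀) ≠ 0 :=
    (map_ne_zero _).2 (hf.toIsUnivalentOn.deriv_ne_zero hU hx₀U)
  have hc₀ : c ≠ 0 := left_ne_zero_of_mul (hderiv ▸ hne)
  apply (starRingEnd ℂ).injective
  have hfz : conj (f (conj z)) = c * f z := hc z hz
  rw [map_mul, map_inv₀, hfz, hderiv, mul_inv_rev, mul_assoc, inv_mul_cancel_left₀ hc₀,
    Complex.conj_conj]

end IsRiemannMap

end RiemannMapping

theorem exists_isUnivalentOn_starConvex_image_conj_eq {U : Set ℂ} {x₀ : ℂ} (hU : IsOpen U)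
    (hsc : IsSimplyConnected U) (hsymm : MapsTo conj U U) (hx₀U : x₀ ∈ U) (hx₀ : conj x₀ = x₀) :
    ∃ f, IsUnivalentOn f U ∧ f x₀ = 0 ∧ StarConvex ℝ 0 (f '' U) ∧
      ∀ z ∈ U, f (conj z) = conj (f z) := by
  rcases eq_or_ne U univ with rfl | hne
  · have hsurj : Surjective (· - x₀) := (Equiv.subRight x₀).surjective
    exact ⟨(· - x₀), ⟨differentiableOn_id.sub_const x₀, sub_left_injective.injOn⟩, sub_self x₀,
      by rw [image_univ, hsurj.range_eq]; exact starConvex_univ 0, fun z _ ↦ by simp [hx₀]⟩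
  obtain ⟨f, hf⟩ := exists_isRiemannMap hU hsc hne hx₀U
  have ha : (deriv f x₀)⁻¹ ≠ 0 := inv_ne_zero (hf.toIsUnivalentOn.deriv_ne_zero hU hx₀U)
  refine ⟨fun z ↦ (deriv f x₀)⁻¹ * f z, ⟨hf.differentiableOn.const_mul _,
    (mul_right_injective₀ ha).comp_injOn hf.injOn⟩, by simp [hf.map_base], ?_,
    fun z hz ↦ hf.conj_inv_deriv_mul hU hsymm hx₀U hx₀ hz⟩
  have himage : (fun z ↦ (deriv f x₀)⁻¹ * f z) '' U =
      LinearMap.mulLeft ℝ (deriv f x₀)⁻¹ '' ball 0 1 := by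
    rw [← hf.image_eq, image_image]
    rfl
  have hball : StarConvex ℝ 0 (ball (0 : ℂ) 1) :=
    (convex_ball 0 1).starConvex (mem_ball_self one_pos)
  rw [himage]
  simpa using hball.linear_image (LinearMap.mulLeft ℝ (deriv f x₀)⁻¹)

/-- The radial contraction of `U` along a chart `f`: `z` is moved to the point of `U` whose image
under `f` is `t • f z`. It is meaningful for `0 ≤ t ≤ 1` when `f '' U` is star-shaped about the
origin. -/
noncomputable def radialContraction (f : ℂ → ℂ) (U : Set ℂ) (z : ℂ) (t : ℝ) : ℂ :=
  invFunOn f U (t • f z)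

section RadialContraction

variable {f : ℂ → ℂ} {U : Set ℂ} {x₀ z : ℂ} {t : ℝ}

theorem smul_mem_image (hstar : StarConvex ℝ 0 (f '' U)) (hz : z ∈ U) (ht : t ∈ Icc (0 : ℝ) 1) :
    t • f z ∈ f '' U :=
  hstar.smul_mem (mem_image_of_mem f hz) ht.1 ht.2

theorem radialContraction_mem (hstar : StarConvex ℝ 0 (f '' U)) (hz : z ∈ U)
    (ht : t ∈ Icc (0 : ℝ) 1) : radialContraction f U z t ∈ U :=
  invFunOn_mem (smul_mem_image hstar hz ht)

theorem map_radialContraction (hstar : StarConvex ℝ 0 (f '' U)) (hz : z ∈ U)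
    (ht : t ∈ Icc (0 : ℝ) 1) : f (radialContraction f U z t) = t • f z :=
  invFunOn_eq (smul_mem_image hstar hz ht)

theorem radialContraction_one (hf : InjOn f U) (hz : z ∈ U) : radialContraction f U z 1 = z := by
  rw [radialContraction, one_smul, hf.leftInvOn_invFunOn hz]

theorem radialContraction_zero (hf : InjOn f U) (hx₀ : x₀ ∈ U) (hfx₀ : f x₀ = 0) (z : ℂ) :
    radialContraction f U z 0 = x₀ := by
  rw [radialContraction, zero_smul, ← hfx₀, hf.leftInvOn_invFunOn hx₀]

theorem differentiableOn_radialContraction (hf : IsUnivalentOn f U) (hU : IsOpen U)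
    (hstar : StarConvex ℝ 0 (f '' U)) (ht : t ∈ Icc (0 : ℝ) 1) :
    DifferentiableOn ℂ (fun z ↦ radialContraction f U z t) U :=
  (hf.differentiableOn_invFunOn hU).comp (hf.differentiableOn.const_smul t)
    fun _ hz ↦ smul_mem_image hstar hz ht

theorem continuousOn_radialContraction (hf : IsUnivalentOn f U) (hU : IsOpen U)
    (hstar : StarConvex ℝ 0 (f '' U)) :
    ContinuousOn (fun p : ℂ × ℝ ↦ radialContraction f U p.1 p.2) (U ×ˢ Icc (0 : ℝ) 1) :=
  (hf.differentiableOn_invFunOn hU).continuousOn.comp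
    (continuousOn_snd.smul (hf.differentiableOn.continuousOn.comp continuousOn_fst
      fun _ hp ↦ hp.1)) fun _ hp ↦ smul_mem_image hstar hp.1 hp.2

theorem radialContraction_conj (hf : InjOn f U) (hstar : StarConvex ℝ 0 (f '' U))
    (hsymm : MapsTo conj U U) (hconj : ∀ z ∈ U, f (conj z) = conj (f z)) (hz : z ∈ U)
    (ht : t ∈ Icc (0 : ℝ) 1) :
    radialContraction f U (conj z) t = conj (radialContraction f U z t) := by
  have hmem := radialContraction_mem hstar hz ht
  refine hf (radialContraction_mem hstar (hsymm hz) ht) (hsymm hmem) ?_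
  rw [map_radialContraction hstar (hsymm hz) ht, hconj z hz, hconj _ hmem,
    map_radialContraction hstar hz ht, Complex.real_smul, Complex.real_smul, map_mul,
    Complex.conj_ofReal]

end RadialContraction

theorem symmetric_holomorphic_retraction_slice_general {D : Set ℂ} {x₀ : ℂ} (hopen : IsOpen D)
    (hsc : IsSimplyConnected D) (hsym : MapsTo conj D D) (hx₀ : x₀ ∈ D) (hx₀R : conj x₀ = x₀) :
    ∃ H : ℂ → ℝ → ℂ,
      ContinuousOn (fun p : ℂ × ℝ ↦ H p.1 p.2) (D ×ˢ Icc (0 : ℝ) 1) ∧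
      (∀ z ∈ D, ∀ t ∈ Icc (0 : ℝ) 1, H z t ∈ D) ∧
      (∀ z ∈ D, H z 1 = z) ∧
      (∀ z ∈ D, H z 0 = x₀) ∧
      (∀ t ∈ Icc (0 : ℝ) 1, DifferentiableOn ℂ (fun z ↦ H z t) D) ∧
      (∀ t ∈ Icc (0 : ℝ) 1, ∀ z ∈ D, H (conj z) t = conj (H z t)) := by
  obtain ⟨f, hf, hfx₀, hstar, hconj⟩ :=
    exists_isUnivalentOn_starConvex_image_conj_eq hopen hsc hsym hx₀ hx₀R
  exact ⟨radialContraction f D,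
    continuousOn_radialContraction hf hopen hstar,
    fun _ hz _ ht ↦ radialContraction_mem hstar hz ht,
    fun _ hz ↦ radialContraction_one hf.injOn hz,
    fun z _ ↦ radialContraction_zero hf.injOn hx₀ hfx₀ z,
    fun _ ht ↦ differentiableOn_radialContraction hf hopen hstar ht,
    fun _ ht _ hz ↦ radialContraction_conj hf.injOn hstar hsym hconj hz ht⟩

/-- A nonempty open, connected, simply connected symmetric set `D ⊆ ℂ` meeting `ℝ`,
with closure a closed topological disc, admits a holomorphic Schwarz symmetric strong
deformation retraction onto a real point `x₀ ∈ D ∩ ℝ`. -/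
theorem symmetric_holomorphic_retraction_slice (D : Set ℂ)
    (hne : D.Nonempty) (hopen : IsOpen D) (hconn : IsConnected D)
    (hsc : SimplyConnectedSpace D)
    (hsym : (starRingEnd ℂ) '' D = D)
    (hdisc : Nonempty (closure D ≃ₜ closedBall (0 : ℂ) 1))
    (x₀ : ℂ) (hx₀ : x₀ ∈ D) (hx₀R : x₀.im = 0) :
    ∃ H : ℂ → ℝ → ℂ,
      ContinuousOn (fun p : ℂ × ℝ => H p.1 p.2) (D ×ˢ Icc (0 : ℝ) 1) ∧
      (∀ z ∈ D, ∀ t ∈ Icc (0 : ℝ) 1, H z t ∈ D) ∧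
      (∀ z ∈ D, H z 1 = z) ∧
      (∀ z ∈ D, H z 0 = x₀) ∧
      (∀ t ∈ Icc (0 : ℝ) 1, DifferentiableOn ℂ (fun z => H z t) D) ∧
      (∀ t ∈ Icc (0 : ℝ) 1, ∀ z ∈ D, H ((starRingEnd ℂ) z) t = (starRingEnd ℂ) (H z t)) := by
  exact symmetric_holomorphic_retraction_slice_general hopen hsc
    (mapsTo_iff_image_subset.2 hsym.subset) hx₀ (Complex.conj_eq_iff_im.2 hx₀R)
end

section
/- Let D ⊆ ℂ be a nonempty open, connected, simply connected symmetric set with D ∩ ℝ ≠ ∅ whose closure is homeomorphic to the closed unit disc. Let G be the set of all holomorphic, nowhere vanishing, Schwarz symmetric functions f : D → ℂ, equipped with the topology of uniform convergence on compact subsets of D. Then G has exactly two path components; two functions f, g ∈ G lie in the same path component if and only if f(x)·g(x) > 0 for every x ∈ D ∩ ℝ. -/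
open Set Metric

/-- The set of continuous maps on `D` (with the compact-open topology, which on the
open set `D` is the topology of uniform convergence on compact subsets of `D`) that
are restrictions of holomorphic, nowhere vanishing, Schwarz symmetric functions. -/
def schwarzNonvanishing (D : Set ℂ) : Set C(D, ℂ) :=
  {F | ∃ f : ℂ → ℂ, DifferentiableOn ℂ f D ∧ (∀ z ∈ D, f z ≠ 0) ∧
    (∀ z ∈ D, f ((starRingEnd ℂ) z) = (starRingEnd ℂ) (f z)) ∧
    ∀ z : D, F z = f (z : ℂ)}

/-!
The sign of `F ∈ schwarzNonvanishing D` at a point of `D ∩ ℝ` is constant along paths by the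
intermediate value theorem. Conversely, if `F` and `G` have the same sign at one point of `D ∩ ℝ`,
then `G / F` has a holomorphic logarithm `h` on `D`, which can be normalised to be real at that
point. Uniqueness of lifts along `exp` then makes `h` Schwarz symmetric, and `t ↦ F * exp (t * h)`
is a path from `F` to `G`.
-/

open scoped ComplexConjugate

/-- `f` is Schwarz symmetric on `D`, the third condition in `schwarzNonvanishing`. No symmetry of
`D` is built in: if `z ∈ D` and `conj z ∉ D`, it constrains a value of `f` outside `D`. -/
def SchwarzSymmetricOn (f : ℂ → ℂ) (D : Set ℂ) : Prop :=
  ∀ z ∈ D, f (conj z) = conj (f z)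

theorem schwarzSymmetricOn_const (c : ℝ) (D : Set ℂ) : SchwarzSymmetricOn (fun _ => (c : ℂ)) D :=
  fun _ _ => (Complex.conj_ofReal c).symm

namespace SchwarzSymmetricOn

variable {D : Set ℂ} {f g : ℂ → ℂ} {z : ℂ}

theorem mul (hf : SchwarzSymmetricOn f D) (hg : SchwarzSymmetricOn g D) :
    SchwarzSymmetricOn (fun z => f z * g z) D :=
  fun z hz => by simp only [hf z hz, hg z hz, map_mul]

theorem div (hf : SchwarzSymmetricOn f D) (hg : SchwarzSymmetricOn g D) :
    SchwarzSymmetricOn (fun z => f z / g z) D :=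
  fun z hz => by simp only [hf z hz, hg z hz, map_div₀]

theorem cexp (hf : SchwarzSymmetricOn f D) : SchwarzSymmetricOn (fun z => Complex.exp (f z)) D :=
  fun z hz => by simp only [hf z hz, Complex.exp_conj]

theorem im_eq_zero (hf : SchwarzSymmetricOn f D) (hzD : z ∈ D) (hz : z.im = 0) :
    (f z).im = 0 := by
  have hfz := hf z hzD
  rw [Complex.conj_eq_iff_im.2 hz] at hfz
  exact Complex.conj_eq_iff_im.1 hfz.symm

theorem of_cexp (hD : IsPreconnected D) (hconj : MapsTo conj D D) (hg : ContinuousOn g D)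
    (hexp : SchwarzSymmetricOn (fun z => Complex.exp (g z)) D) (hzD : z ∈ D)
    (hgz : g (conj z) = conj (g z)) : SchwarzSymmetricOn g D := by
  have hg_conj : ContinuousOn (fun w => g (conj w)) D :=
    hg.comp Complex.continuous_conj.continuousOn hconj
  have hconj_g : ContinuousOn (fun w => conj (g w)) D :=
    Complex.continuous_conj.comp_continuousOn hg
  exact Complex.isCoveringMap_exp.eqOn_of_comp_eqOn hD hg_conj hconj_g
    (fun w hw => Subtype.ext ((hexp w hw).trans (Complex.exp_conj (g w)).symm)) hzD hgz

end SchwarzSymmetricOn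

section Logarithm

variable {D : Set ℂ} {f g : ℂ → ℂ} {x : ℂ}

theorem differentiableOn_of_eqOn_exp (hf : DifferentiableOn ℂ f D) (hg : ContinuousOn g D)
    (hfg : EqOn (fun z => Complex.exp (g z)) f D) : DifferentiableOn ℂ g D := fun z hz =>
  have hexp : HasFDerivWithinAt Complex.exp _ univ (g z) :=
    (Complex.hasDerivAt_exp (g z)).hasFDerivAt.hasFDerivWithinAt
  have hinv : Function.LeftInverse
      (ContinuousLinearMap.toSpanSingleton ℂ (Complex.exp (g z))⁻¹)
      (ContinuousLinearMap.toSpanSingleton ℂ (Complex.exp (g z))) := fun w => by simp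
  (HasFDerivWithinAt.of_comp_of_leftInverse ((nhdsWithin_univ (g z)).symm ▸ hg z hz) hexp
    (hf z hz).hasFDerivWithinAt hfg.eventuallyEq_nhdsWithin hinv hz).differentiableWithinAt

theorem exists_differentiableOn_eqOn_exp (hD : IsOpen D) (hsc : IsSimplyConnected D)
    (hf : DifferentiableOn ℂ f D) (hf0 : ∀ z ∈ D, f z ≠ 0) :
    ∃ g : ℂ → ℂ, DifferentiableOn ℂ g D ∧ EqOn (fun z => Complex.exp (g z)) f D := by
  obtain ⟨g, hg, hgf⟩ := Complex.exists_continuousOn_eqOn_exp_comp hsc hD hf.continuousOn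
    (fun ⟨z, hz, hfz⟩ => hf0 z hz hfz)
  exact ⟨g, differentiableOn_of_eqOn_exp hf hg hgf, hgf⟩

theorem exists_schwarzSymmetricOn_eqOn_exp (hD : IsOpen D) (hsc : IsSimplyConnected D)
    (hconj : MapsTo conj D D) (hf : DifferentiableOn ℂ f D) (hf0 : ∀ z ∈ D, f z ≠ 0)
    (hfs : SchwarzSymmetricOn f D) (hxD : x ∈ D) (hx : x.im = 0) (hpos : 0 < (f x).re) :
    ∃ g : ℂ → ℂ, DifferentiableOn ℂ g D ∧ SchwarzSymmetricOn g D ∧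
      EqOn (fun z => Complex.exp (g z)) f D := by
  obtain ⟨g₀, hg₀, hg₀f⟩ := exists_differentiableOn_eqOn_exp hD hsc hf hf0
  let g : ℂ → ℂ := fun z => g₀ z - g₀ x + Real.log (f x).re
  have hg : DifferentiableOn ℂ g D := (hg₀.sub_const _).add_const _
  have hfx : ((f x).re : ℂ) = f x := Complex.ext rfl (hfs.im_eq_zero hxD hx).symm
  have hgf : EqOn (fun z => Complex.exp (g z)) f D := fun z hz =>
    calc Complex.exp (g z)
        = Complex.exp (g₀ z) / Complex.exp (g₀ x) * Complex.exp (Real.log (f x).re) := by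
          rw [Complex.exp_add, Complex.exp_sub]
      _ = f z / f x * f x := by
          rw [← Complex.ofReal_exp, Real.exp_log hpos, hfx]
          exact congrArg₂ (· / · * f x) (hg₀f hz) (hg₀f hxD)
      _ = f z := div_mul_cancel₀ _ (hf0 x hxD)
  have hexp : SchwarzSymmetricOn (fun z => Complex.exp (g z)) D := fun z hz =>
    (hgf (hconj hz)).trans ((hfs z hz).trans (congrArg conj (hgf hz)).symm)
  have hgx : g (conj x) = conj (g x) := by
    simp only [g, Complex.conj_eq_iff_im.2 hx, sub_self, zero_add, Complex.conj_ofReal]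
  exact ⟨g, hg, .of_cexp hsc.isPathConnected.isConnected.isPreconnected hconj hg.continuousOn
    hexp hxD hgx, hgf⟩

end Logarithm

theorem mul_pos_of_joinedIn_compl_zero {a b : ℝ} (h : JoinedIn {0}ᶜ a b) : 0 < a * b := by
  obtain ⟨γ, hγ⟩ := h
  have ha : a ≠ 0 := by simpa using hγ 0
  by_contra! hab
  obtain ⟨t, ht⟩ : (0 : ℝ) ∈ range fun t => a * γ t :=
    mem_range_of_exists_le_of_exists_ge (continuous_const.mul γ.continuous)
      ⟨1, by simpa using hab⟩ ⟨0, by simpa using mul_self_nonneg a⟩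
  exact (mul_ne_zero ha (hγ t)) ht

section schwarzNonvanishing

variable {D : Set ℂ} {F G : C(D, ℂ)} {h : ℂ → ℂ} {z : D}

theorem const_mem_schwarzNonvanishing {c : ℝ} (hc : c ≠ 0) :
    ContinuousMap.const D (c : ℂ) ∈ schwarzNonvanishing D :=
  ⟨fun _ => c, differentiableOn_const _, fun _ _ => Complex.ofReal_ne_zero.2 hc,
    schwarzSymmetricOn_const c D, fun _ => rfl⟩

theorem mem_schwarzNonvanishing_of_eq_mul_exp (hF : F ∈ schwarzNonvanishing D)
    (hh : DifferentiableOn ℂ h D) (hhs : SchwarzSymmetricOn h D)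
    (hG : ∀ z : D, G z = F z * Complex.exp (h z)) : G ∈ schwarzNonvanishing D := by
  obtain ⟨f, hf, hf0, hfs, hFf⟩ := hF
  exact ⟨fun z => f z * Complex.exp (h z), hf.mul hh.cexp,
    fun z hz => mul_ne_zero (hf0 z hz) (Complex.exp_ne_zero _), SchwarzSymmetricOn.mul hfs hhs.cexp,
    fun z => by rw [hG, hFf]⟩

theorem joinedIn_schwarzNonvanishing_of_eq_mul_exp (hF : F ∈ schwarzNonvanishing D)
    (hh : DifferentiableOn ℂ h D) (hhs : SchwarzSymmetricOn h D)
    (hG : ∀ z : D, G z = F z * Complex.exp (h z)) : JoinedIn (schwarzNonvanishing D) F G := by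
  let k : C(D, ℂ) := ⟨D.domRestrict h, hh.continuousOn.domRestrict⟩
  let γ : ℝ → C(D, ℂ) := fun t => ⟨fun z => F z * Complex.exp (t * k z), by fun_prop⟩
  have hγ : Continuous γ := ContinuousMap.continuous_of_continuous_uncurry _ <|
    show Continuous fun p : ℝ × D => F p.2 * Complex.exp (p.1 * k p.2) by fun_prop
  refine .ofLine hγ.continuousOn (ContinuousMap.ext fun z => ?_) (ContinuousMap.ext fun z => ?_) ?_
  · simp [γ]
  · simp [γ, k, hG]
  · rintro _ ⟨t, -, rfl⟩
    exact mem_schwarzNonvanishing_of_eq_mul_exp hF (hh.const_mul _)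
      ((schwarzSymmetricOn_const t D).mul hhs) fun _ => rfl

theorem im_apply_eq_zero_of_mem_schwarzNonvanishing (hF : F ∈ schwarzNonvanishing D)
    (hz : (z : ℂ).im = 0) : (F z).im = 0 := by
  obtain ⟨f, -, -, hfs, hFf⟩ := hF
  rw [hFf]
  exact SchwarzSymmetricOn.im_eq_zero hfs z.2 hz

theorem re_apply_ne_zero_of_mem_schwarzNonvanishing (hF : F ∈ schwarzNonvanishing D)
    (hz : (z : ℂ).im = 0) : (F z).re ≠ 0 := by
  intro hre
  have him := im_apply_eq_zero_of_mem_schwarzNonvanishing hF hz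
  obtain ⟨f, -, hf0, -, hFf⟩ := hF
  exact hf0 z z.2 (hFf z ▸ Complex.ext hre him)

theorem re_mul_apply_of_mem_schwarzNonvanishing (hF : F ∈ schwarzNonvanishing D)
    (hz : (z : ℂ).im = 0) (w : ℂ) : (F z * w).re = (F z).re * w.re := by
  rw [Complex.mul_re, im_apply_eq_zero_of_mem_schwarzNonvanishing hF hz, zero_mul, sub_zero]

theorem re_mul_apply_pos_of_joinedIn_schwarzNonvanishing
    (hFG : JoinedIn (schwarzNonvanishing D) F G) (hz : (z : ℂ).im = 0) :
    0 < (F z * G z).re := by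
  have hcont : Continuous fun H : C(D, ℂ) => (H z).re :=
    Complex.continuous_re.comp (ContinuousEvalConst.continuous_eval_const z)
  rw [re_mul_apply_of_mem_schwarzNonvanishing hFG.source_mem hz]
  exact mul_pos_of_joinedIn_compl_zero <| (hFG.map hcont).mono <|
    image_subset_iff.2 fun H hH => re_apply_ne_zero_of_mem_schwarzNonvanishing hH hz

theorem joinedIn_schwarzNonvanishing_of_re_mul_apply_pos (hD : IsOpen D)
    (hsc : IsSimplyConnected D) (hconj : MapsTo conj D D) (hF : F ∈ schwarzNonvanishing D)
    (hG : G ∈ schwarzNonvanishing D) (hz : (z : ℂ).im = 0) (hpos : 0 < (F z * G z).re) :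
    JoinedIn (schwarzNonvanishing D) F G := by
  have hquot : 0 < (G z / F z).re := by
    have hFz : ((F z).re : ℂ) = F z :=
      Complex.ext rfl (im_apply_eq_zero_of_mem_schwarzNonvanishing hF hz).symm
    rwa [← hFz, Complex.div_ofReal_re, div_pos_iff, ← mul_pos_iff, mul_comm,
      ← re_mul_apply_of_mem_schwarzNonvanishing hF hz]
  have ⟨f, hf, hf0, hfs, hFf⟩ := hF
  obtain ⟨g, hg, hg0, hgs, hGg⟩ := hG
  obtain ⟨h, hh, hhs, hexp⟩ := exists_schwarzSymmetricOn_eqOn_exp hD hsc hconj (hg.div hf hf0)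
    (fun w hw => div_ne_zero (hg0 w hw) (hf0 w hw)) (SchwarzSymmetricOn.div hgs hfs) z.2 hz
    (by simpa only [Pi.div_apply, hFf, hGg] using hquot)
  refine joinedIn_schwarzNonvanishing_of_eq_mul_exp hF hh hhs fun w => ?_
  have hw : Complex.exp (h w) = g w / f w := hexp w.2
  rw [hFf, hGg, hw, mul_div_cancel₀ _ (hf0 w w.2)]

end schwarzNonvanishing

theorem schwarzNonvanishing_two_path_components_general {D : Set ℂ} (hopen : IsOpen D)
    (hsc : IsSimplyConnected D) (hconj : MapsTo conj D D) (hR : ∃ x ∈ D, x.im = 0) :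
    (∃ F₀ ∈ schwarzNonvanishing D, ∃ F₁ ∈ schwarzNonvanishing D,
      ¬ JoinedIn (schwarzNonvanishing D) F₀ F₁ ∧
      ∀ F ∈ schwarzNonvanishing D,
        JoinedIn (schwarzNonvanishing D) F F₀ ∨ JoinedIn (schwarzNonvanishing D) F F₁) ∧
    (∀ F ∈ schwarzNonvanishing D, ∀ G ∈ schwarzNonvanishing D,
      (JoinedIn (schwarzNonvanishing D) F G ↔
        ∀ z : D, (z : ℂ).im = 0 → 0 < (F z * G z).re)) := by
  obtain ⟨x, hxD, hx⟩ := hR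
  have joinedIn_of_pos {F G : C(D, ℂ)} (hF : F ∈ schwarzNonvanishing D)
      (hG : G ∈ schwarzNonvanishing D) (hpos : 0 < (F ⟨x, hxD⟩ * G ⟨x, hxD⟩).re) :
      JoinedIn (schwarzNonvanishing D) F G :=
    joinedIn_schwarzNonvanishing_of_re_mul_apply_pos hopen hsc hconj hF hG hx hpos
  have hone := const_mem_schwarzNonvanishing (D := D) one_ne_zero
  have hnegOne := const_mem_schwarzNonvanishing (D := D) (neg_ne_zero.2 one_ne_zero)
  refine ⟨⟨_, hone, _, hnegOne, fun hjoin => ?_, fun F hF => ?_⟩,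
    fun F hF G hG => ⟨fun hjoin z hz => re_mul_apply_pos_of_joinedIn_schwarzNonvanishing hjoin hz,
      fun hpos => joinedIn_of_pos hF hG (hpos ⟨x, hxD⟩ hx)⟩⟩
  · have hpos := re_mul_apply_pos_of_joinedIn_schwarzNonvanishing (z := ⟨x, hxD⟩) hjoin hx
    norm_num at hpos
  · rcases (re_apply_ne_zero_of_mem_schwarzNonvanishing hF (z := ⟨x, hxD⟩) hx).lt_or_gt
      with hneg | hpos
    · exact .inr (joinedIn_of_pos hF hnegOne (by simpa using hneg))
    · exact .inl (joinedIn_of_pos hF hone (by simpa using hpos))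

/-- For a basic slice-type symmetric domain `D`, the group of holomorphic nowhere
vanishing Schwarz symmetric functions on `D` has exactly two path components, and two
such functions are joined by a path iff their product is positive on `D ∩ ℝ`. -/
theorem schwarzNonvanishing_two_path_components (D : Set ℂ)
    (hne : D.Nonempty) (hopen : IsOpen D) (hconn : IsConnected D)
    (hsc : SimplyConnectedSpace D)
    (hsym : (starRingEnd ℂ) '' D = D)
    (hR : ∃ x ∈ D, x.im = 0)
    (hdisc : Nonempty (closure D ≃ₜ closedBall (0 : ℂ) 1)) :
    (∃ F₀ ∈ schwarzNonvanishing D, ∃ F₁ ∈ schwarzNonvanishing D,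
      ¬ JoinedIn (schwarzNonvanishing D) F₀ F₁ ∧
      ∀ F ∈ schwarzNonvanishing D,
        JoinedIn (schwarzNonvanishing D) F F₀ ∨ JoinedIn (schwarzNonvanishing D) F F₁) ∧
    (∀ F ∈ schwarzNonvanishing D, ∀ G ∈ schwarzNonvanishing D,
      (JoinedIn (schwarzNonvanishing D) F G ↔
        ∀ z : D, (z : ℂ).im = 0 → 0 < (F z * G z).re)) :=
  schwarzNonvanishing_two_path_components_general hopen hsc (mapsTo_iff_image_subset.2 hsym.le) hR
end
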